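/- Let H ⊆ binom([n],3) be a 2-resilient 3-graph with matching number 2, and let u,v ∈ [n]. Then the number of edges of H meeting {u,v}, i.e. |{T ∈ H : T ∩ {u,v} ≠ ∅}|, is at most 36. -/

import Mathlib

/-- The matching number of a hypergraph: the largest size of a set of
pairwise disjoint edges. -/
noncomputable def matchingNumber (H : Finset (Finset ℕ)) : ℕ :=
  sSup {m | ∃ M : Finset (Finset ℕ), M ⊆ H ∧ M.card = m ∧
    (M : Set (Finset ℕ)).PairwiseDisjoint id}

/-- A hypergraph is `t`-resilient if deleting any set of at most `t`
vertices does not decrease its matching number. -/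
def Resilient (t : ℕ) (H : Finset (Finset ℕ)) : Prop :=
  ∀ T : Finset ℕ, T.card ≤ t →
    matchingNumber (H.filter fun F => Disjoint F T) = matchingNumber H

/-- `S 0, …, S (r-1)` form a pseudo sunflower with center `C`:
the `S i` are distinct, `C` is a proper subset of one of them, and the
sets `S i \ C` are pairwise disjoint. -/
def IsPseudoSunflower {r : ℕ} (S : Fin r → Finset ℕ) (C : Finset ℕ) : Prop :=
  Function.Injective S ∧ (∃ i, C ⊂ S i) ∧
    ∀ i j, i ≠ j → Disjoint (S i \ C) (S j \ C)

/-- The covering (transversal) number of a hypergraph. -/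
noncomputable def coverNumber (H : Finset (Finset ℕ)) : ℕ :=
  sInf {m | ∃ Y : Finset ℕ, Y.card = m ∧ ∀ F ∈ H, (F ∩ Y).Nonempty}

/-!
Let `A` and `B` be disjoint edges avoiding `u` and `v`.  No edge misses both, so by the symmetry
between `A` and `B` it suffices to bound by 36 twice the number of edges at `u` or `v` missing `B`
plus the number of those meeting both `A` and `B`.

The edges at `u` missing `B ∪ {v}` and the edges at `v` missing `B ∪ {u}` have links `P` and `Q`,
two graphs whose edges all meet `A` and which are cross-intersecting because there are no three
disjoint edges.  The other edges are counted by a weight on the three vertices of `A`.  Two disjoint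
edges that avoid `x` and `y` together contain the third vertex of every edge through `x` and `y`, so
there are at most six such edges; applied to the pairs `{u, a}` and `{v, a}` with `a ∈ A`, this
trades the weight of `a` against its degrees in `P` and `Q`.  A short case analysis of
cross-intersecting graphs then gives the bound.
-/

section Graphs

open Finset

variable {α : Type*} {P Q : Finset (Finset α)} {A S : Finset α} {x y : α}

/-- A graph, given as a family of two-element sets, that has `A` as a vertex cover. -/
structure IsGraphCoveredBy (P : Finset (Finset α)) (A : Finset α) : Prop where
  sized : (P : Set (Finset α)).Sized 2
  not_disjoint : ∀ e ∈ P, ¬ Disjoint e A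

/-- Every member of `P` meets every member of `Q`. -/
def CrossIntersecting (P Q : Finset (Finset α)) : Prop :=
  ∀ e ∈ P, ∀ f ∈ Q, ¬ Disjoint e f

theorem IsGraphCoveredBy.mono (hP : IsGraphCoveredBy P A) (hQ : Q ⊆ P) : IsGraphCoveredBy Q A :=
  ⟨hP.sized.mono (coe_subset.2 hQ), fun e he => hP.not_disjoint e (hQ he)⟩

theorem CrossIntersecting.symm (h : CrossIntersecting P Q) : CrossIntersecting Q P :=
  fun f hf e he => disjoint_comm.not.1 (h e he f hf)

theorem card_le_card_of_common_vertex (hP : (P : Set (Finset α)).Sized 2)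
    (hx : ∀ e ∈ P, x ∈ e) (hxS : x ∉ S) (hS : ∀ e ∈ P, ¬ Disjoint e S) : #P ≤ #S := by
  classical
  have hsub : P ⊆ S.image fun z => {z, x} := by
    intro e he
    obtain ⟨z, hze, hzS⟩ := not_disjoint_iff.1 (hS e he)
    refine mem_image.2 ⟨z, hzS, eq_of_subset_of_card_le ?_ ?_⟩
    · exact insert_subset hze (singleton_subset_iff.2 (hx e he))
    · rw [hP he, card_pair (ne_of_mem_of_not_mem hzS hxS)]
  exact (card_le_card hsub).trans card_image_le

theorem IsGraphCoveredBy.card_lt_of_common_vertex (hP : IsGraphCoveredBy P A)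
    (hxA : x ∈ A) (hx : ∀ e ∈ P, x ∉ e) (hyA : y ∉ A) (hy : ∀ e ∈ P, y ∈ e) : #P < #A := by
  classical
  refine (card_le_card_of_common_vertex hP.sized hy (fun h => hyA (mem_of_mem_erase h)) ?_).trans_lt
    (card_erase_lt_of_mem hxA)
  intro e he
  obtain ⟨a, hae, haA⟩ := not_disjoint_iff.1 (hP.not_disjoint e he)
  exact not_disjoint_iff.2 ⟨a, hae, mem_erase.2 ⟨ne_of_mem_of_not_mem hae (hx e he), haA⟩⟩

variable [DecidableEq α]

/-- The number of members of the set family `F` that contain `x`. -/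
def vertexDegree (F : Finset (Finset α)) (x : α) : ℕ :=
  #{e ∈ F | x ∈ e}

theorem card_eq_vertexDegree_add_card_filter_notMem (F : Finset (Finset α)) (x : α) :
    #F = vertexDegree F x + #{e ∈ F | x ∉ e} :=
  (card_filter_add_card_filter_not _).symm

theorem vertexDegree_eq_card (h : ∀ e ∈ P, x ∈ e) : vertexDegree P x = #P := by
  rw [vertexDegree, filter_true_of_mem h]

theorem sum_vertexDegree (F : Finset (Finset α)) (A : Finset α) :
    ∑ x ∈ A, vertexDegree F x = ∑ e ∈ F, #(A ∩ e) := by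
  simp only [vertexDegree, ← filter_mem_eq_inter]
  exact sum_card_bipartiteAbove_eq_sum_card_bipartiteBelow (fun x e => x ∈ e)

theorem card_le_sum_vertexDegree (h : ∀ e ∈ P, ¬ Disjoint e A) :
    #P ≤ ∑ x ∈ A, vertexDegree P x := by
  rw [sum_vertexDegree, card_eq_sum_ones]
  refine sum_le_sum fun e he => card_pos.2 ?_
  rw [inter_comm, ← not_disjoint_iff_nonempty_inter]
  exact h e he

theorem IsGraphCoveredBy.two_mul_card_le (hP : IsGraphCoveredBy P A) :
    2 * #P ≤ ∑ a ∈ A, vertexDegree P a + ∑ a ∈ A, vertexDegree {e ∈ P | ¬ e ⊆ A} a := by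
  have inside : ∑ e ∈ P with e ⊆ A, #(A ∩ e) = 2 * #{e ∈ P | e ⊆ A} := by
    rw [mul_comm]
    refine sum_const_nat fun e he => ?_
    obtain ⟨heP, heA⟩ := mem_filter.1 he
    rw [inter_eq_right.2 heA, hP.sized heP]
  have crossing : #{e ∈ P | ¬ e ⊆ A} ≤ ∑ e ∈ P with ¬ e ⊆ A, #(A ∩ e) := by
    rw [← sum_vertexDegree]
    exact card_le_sum_vertexDegree fun e he => hP.not_disjoint e (mem_filter.1 he).1
  have card_split := card_filter_add_card_filter_not (s := P) (· ⊆ A)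
  have sum_split := sum_filter_add_sum_filter_not P (· ⊆ A) fun e => #(A ∩ e)
  rw [sum_vertexDegree, sum_vertexDegree]
  omega

theorem CrossIntersecting.mem_of_three_le_vertexDegree (h : CrossIntersecting P Q)
    (hP : (P : Set (Finset α)).Sized 2) (hQ : (Q : Set (Finset α)).Sized 2)
    (hx : 3 ≤ vertexDegree P x) : ∀ f ∈ Q, x ∈ f := by
  intro f hf
  by_contra hxf
  have : vertexDegree P x ≤ #f :=
    card_le_card_of_common_vertex (hP.mono (coe_subset.2 (filter_subset _ _)))
      (fun e he => (mem_filter.1 he).2) hxf (fun e he => h e (mem_filter.1 he).1 f hf)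
  rw [hQ hf] at this
  omega

theorem IsGraphCoveredBy.card_le_two_of_common_vertex (hP : IsGraphCoveredBy P A) (hA : #A = 3)
    (hdeg : ∀ a ∈ A, vertexDegree P a ≤ 2)
    (hxA : x ∈ A) (hx : ∀ e ∈ P, x ∉ e) (hy : ∀ e ∈ P, y ∈ e) : #P ≤ 2 := by
  by_cases hyA : y ∈ A
  · exact (vertexDegree_eq_card hy).symm.trans_le (hdeg y hyA)
  · have := hP.card_lt_of_common_vertex hxA hx hyA hy
    omega

theorem vertexDegree_mono {F G : Finset (Finset α)} (h : F ⊆ G) (x : α) :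
    vertexDegree F x ≤ vertexDegree G x :=
  card_le_card (filter_subset_filter _ h)

theorem CrossIntersecting.mem_of_pair_mem (h : CrossIntersecting P Q)
    (hf : {x, y} ∈ Q) : ∀ e ∈ {e ∈ P | x ∉ e}, y ∈ e := by
  intro e he
  obtain ⟨heP, hx⟩ := mem_filter.1 he
  have := h e heP _ hf
  rw [disjoint_insert_right, disjoint_singleton_right] at this
  tauto

theorem CrossIntersecting.card_filter_notMem_le_one (h : CrossIntersecting P Q)
    (hP : (P : Set (Finset α)).Sized 2) (hQ : (Q : Set (Finset α)).Sized 2)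
    (hx : 2 ≤ vertexDegree Q x) : #{e ∈ P | x ∉ e} ≤ 1 := by
  obtain ⟨f, hf, g, hg, hfg⟩ := one_lt_card.1 hx
  obtain ⟨hfQ, hxf⟩ := mem_filter.1 hf
  obtain ⟨hgQ, hxg⟩ := mem_filter.1 hg
  obtain ⟨y, -, rfl⟩ := exists_eq_insert_iff.2 ⟨singleton_subset_iff.2 hxf, (hQ hfQ).symm⟩
  obtain ⟨z, -, rfl⟩ := exists_eq_insert_iff.2 ⟨singleton_subset_iff.2 hxg, (hQ hgQ).symm⟩
  have hz := h.mem_of_pair_mem (pair_comm z x ▸ hgQ)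
  have hyz : y ∉ ({z} : Finset α) := fun hyz => hfg (by rw [mem_singleton.1 hyz])
  exact card_le_card_of_common_vertex (hP.mono (coe_subset.2 (filter_subset _ _)))
    (h.mem_of_pair_mem (pair_comm y x ▸ hfQ)) hyz
    fun e he => not_disjoint_iff.2 ⟨z, hz e he, mem_singleton_self z⟩

section SmallDegree

variable (hA : #A = 3) (hP : IsGraphCoveredBy P A) (hQ : IsGraphCoveredBy Q A)
  (h : CrossIntersecting P Q) (hdP : ∀ a ∈ A, vertexDegree P a ≤ 2)
include hA hP hQ h hdP

theorem CrossIntersecting.card_le_four (hne : Q.Nonempty) : #P ≤ 4 := by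
  obtain ⟨f, hf⟩ := hne
  obtain ⟨x, hxf, hxA⟩ := not_disjoint_iff.1 (hQ.not_disjoint f hf)
  obtain ⟨y, -, rfl⟩ := exists_eq_insert_iff.2 ⟨singleton_subset_iff.2 hxf, (hQ.sized hf).symm⟩
  have avoiding : #{e ∈ P | x ∉ e} ≤ 2 := by
    refine (hP.mono (filter_subset _ _)).card_le_two_of_common_vertex hA ?_ hxA
      (fun e he => (mem_filter.1 he).2) (h.mem_of_pair_mem (pair_comm y x ▸ hf))
    exact fun a ha => (vertexDegree_mono (filter_subset _ _) a).trans (hdP a ha)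
  have := card_eq_vertexDegree_add_card_filter_notMem P x
  have := hdP x hxA
  omega

theorem CrossIntersecting.card_le_two_of_four_le (h4 : 4 ≤ #P) : #Q ≤ 2 := by
  obtain ⟨e, he⟩ : P.Nonempty := card_pos.1 (by omega)
  by_cases hdQ : ∀ x, vertexDegree Q x ≤ 1
  · calc #Q ≤ ∑ x ∈ e, vertexDegree Q x := card_le_sum_vertexDegree fun f hf => h.symm f hf e he
      _ ≤ #e * 1 := sum_le_card_nsmul _ _ _ fun x _ => hdQ x
      _ = 2 := by rw [mul_one, hP.sized he]
  push Not at hdQ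
  obtain ⟨x, hdQ⟩ := hdQ
  have havoid := h.card_filter_notMem_le_one hP.sized hQ.sized hdQ
  have hcard := card_eq_vertexDegree_add_card_filter_notMem P x
  have hxA : x ∉ A := fun hxA => by
    have := hdP x hxA
    omega
  have hdx : vertexDegree P x ≤ #A :=
    card_le_card_of_common_vertex (hP.mono (filter_subset _ _)).sized
      (fun e he => (mem_filter.1 he).2) hxA (hP.mono (filter_subset _ _)).not_disjoint
  obtain ⟨e', he'⟩ : {e ∈ P | x ∉ e}.Nonempty := card_pos.1 (by omega)
  obtain ⟨heP', hxe'⟩ := mem_filter.1 he'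
  have hmem := h.mem_of_three_le_vertexDegree hP.sized hQ.sized (show 3 ≤ vertexDegree P x by omega)
  calc #Q ≤ #e' := card_le_card_of_common_vertex hQ.sized hmem hxe' fun f hf => h.symm f hf e' heP'
    _ = 2 := hP.sized heP'

end SmallDegree

theorem CrossIntersecting.card_add_card_le_six (hA : #A = 3) (hP : IsGraphCoveredBy P A)
    (hQ : IsGraphCoveredBy Q A) (h : CrossIntersecting P Q)
    (hdP : ∀ a ∈ A, vertexDegree P a ≤ 2) (hdQ : ∀ a ∈ A, vertexDegree Q a ≤ 2)
    (hneP : P.Nonempty) (hneQ : Q.Nonempty) : #P + #Q ≤ 6 := by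
  have := h.card_le_four hA hP hQ hdP hneQ
  have := h.symm.card_le_four hA hQ hP hdQ hneP
  have := h.card_le_two_of_four_le hA hP hQ hdP
  have := h.symm.card_le_two_of_four_le hA hQ hP hdQ
  omega

/-- A weight on the vertex cover `A` of the graph `P` that is small where the degree in `P` is
large.  The extremal value of `w a + 2 * vertexDegree P a` is `13`; it is attained at `a` without an
edge from `a` to the rest of `A` only if the other two vertices of `A` stay well below it. -/
structure IsAdmissibleWeight (w : α → ℕ) (P : Finset (Finset α)) (A : Finset α) : Prop
    extends IsGraphCoveredBy P A where
  le_eight : ∀ a ∈ A, w a ≤ 8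
  add_le : ∀ a ∈ A, w a + 2 * vertexDegree P a ≤ 13
  add_le_of_extremal : ∀ a ∈ A, 13 ≤ w a + 2 * vertexDegree P a → (∀ e ∈ P, a ∈ e → ¬ e ⊆ A) →
    ∀ b ∈ A, b ≠ a → w b + 2 * vertexDegree P b ≤ 11

variable {w : α → ℕ}

theorem IsAdmissibleWeight.sum_add_two_mul_card_le (hA : #A = 3) (hP : IsAdmissibleWeight w P A) :
    ∑ a ∈ A, w a + 2 * #P ≤ 36 := by
  by_cases hall : ∀ a ∈ A, w a + vertexDegree P a + vertexDegree {e ∈ P | ¬ e ⊆ A} a ≤ 12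
  · have hsum := sum_le_card_nsmul A _ 12 hall
    rw [sum_add_distrib, sum_add_distrib, hA, smul_eq_mul] at hsum
    have := hP.two_mul_card_le
    omega
  push Not at hall
  obtain ⟨a, haA, ha⟩ := hall
  have hsub : {e ∈ P | ¬ e ⊆ A} ⊆ P := filter_subset _ _
  have hle := vertexDegree_mono hsub a
  have hmax := hP.add_le a haA
  have hcross : ∀ e ∈ P, a ∈ e → ¬ e ⊆ A := by
    have heq := eq_of_subset_of_card_le (filter_subset_filter (a ∈ ·) hsub)
      (show vertexDegree P a ≤ vertexDegree {e ∈ P | ¬ e ⊆ A} a by omega)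
    intro e he hae
    have : e ∈ {e ∈ {e ∈ P | ¬ e ⊆ A} | a ∈ e} := heq ▸ mem_filter.2 ⟨he, hae⟩
    exact (mem_filter.1 (mem_filter.1 this).1).2
  have hothers : ∑ b ∈ A.erase a, (w b + 2 * vertexDegree P b) ≤ #(A.erase a) * 11 :=
    sum_le_card_nsmul _ _ _ fun b hb => hP.add_le_of_extremal a haA (by omega) hcross b
      (mem_of_mem_erase hb) (ne_of_mem_erase hb)
  have hsum := add_sum_erase A (fun b => w b + 2 * vertexDegree P b) haA
  rw [card_erase_of_mem haA, hA] at hothers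
  have hcard := card_le_sum_vertexDegree hP.not_disjoint
  simp only [sum_add_distrib, ← mul_sum] at hothers hsum
  omega

theorem IsAdmissibleWeight.sum_erase_le (hA : #A = 3) (hP : IsAdmissibleWeight w P A)
    (hxA : x ∈ A) : ∑ b ∈ A.erase x, w b ≤ 16 := by
  have := sum_le_card_nsmul (A.erase x) w 8 fun b hb => hP.le_eight b (mem_of_mem_erase hb)
  rwa [card_erase_of_mem hxA, hA] at this

theorem IsAdmissibleWeight.sum_add_two_mul_card_le_of_covering_pair (hA : #A = 3)
    (hP : IsAdmissibleWeight w P A) (hxA : x ∈ A) (hyx : y ≠ x)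
    (hy : ∀ e ∈ {e ∈ P | x ∉ e}, y ∈ e) :
    ∑ a ∈ A, w a + 2 * #P ≤ 34 := by
  have hcard := card_eq_vertexDegree_add_card_filter_notMem P x
  have hxP := hP.add_le x hxA
  have hsum := add_sum_erase A w hxA
  by_cases hyA : y ∈ A
  · have hyP := hP.add_le y hyA
    have hdeg : #{e ∈ P | x ∉ e} ≤ vertexDegree P y := by
      rw [← vertexDegree_eq_card hy]
      exact vertexDegree_mono (filter_subset _ _) y
    have hyA' : y ∈ A.erase x := mem_erase.2 ⟨hyx, hyA⟩
    have hsum' := add_sum_erase _ w hyA'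
    have hrest : ∑ b ∈ (A.erase x).erase y, w b ≤ #((A.erase x).erase y) * 8 :=
      sum_le_card_nsmul _ _ _ fun b hb => hP.le_eight b (mem_of_mem_erase (mem_of_mem_erase hb))
    rw [card_erase_of_mem hyA', card_erase_of_mem hxA, hA] at hrest
    omega
  · have hrest := hP.sum_erase_le hA hxA
    have := (hP.mono (filter_subset _ _)).card_lt_of_common_vertex hxA
      (fun e he => (mem_filter.1 he).2) hyA hy
    omega

theorem IsAdmissibleWeight.sum_add_two_mul_card_add_card_le_of_three_le (hA : #A = 3)
    (hP : IsAdmissibleWeight w P A) (hQ : IsAdmissibleWeight w Q A)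
    (h : CrossIntersecting P Q) (hneQ : Q.Nonempty)
    (hboth : ∀ a ∈ A, w a + 2 * vertexDegree P a + 2 * vertexDegree Q a ≤ 20)
    (hxA : x ∈ A) (hx : 3 ≤ vertexDegree P x) : ∑ a ∈ A, w a + 2 * (#P + #Q) ≤ 36 := by
  have hmem := h.mem_of_three_le_vertexDegree hP.sized hQ.sized hx
  have hcardQ := vertexDegree_eq_card hmem
  have hcardP := card_eq_vertexDegree_add_card_filter_notMem P x
  have hbx := hboth x hxA
  have hxP := hP.add_le x hxA
  have hsum := add_sum_erase A w hxA
  have hrest := hP.sum_erase_le hA hxA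
  have hneQ := hneQ.card_pos
  obtain hQ1 | hQ2 | hQ3 : #Q = 1 ∨ #Q = 2 ∨ 3 ≤ #Q := by omega
  · obtain ⟨f, rfl⟩ := card_eq_one.1 hQ1
    have hf := mem_singleton_self f
    obtain ⟨y, hyx, rfl⟩ :=
      exists_eq_insert_iff.2 ⟨singleton_subset_iff.2 (hmem f hf), (hQ.sized hf).symm⟩
    have := hP.sum_add_two_mul_card_le_of_covering_pair hA hxA (notMem_singleton.1 hyx)
      (h.mem_of_pair_mem (pair_comm y x ▸ hf))
    omega
  · have := h.card_filter_notMem_le_one hP.sized hQ.sized (hQ2.symm.trans hcardQ.symm).le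
    omega
  · have : {e ∈ P | x ∉ e} = ∅ := filter_eq_empty_iff.2 fun e he => not_not.2 <|
      h.symm.mem_of_three_le_vertexDegree hQ.sized hP.sized (hQ3.trans_eq hcardQ.symm) e he
    rw [this, card_empty] at hcardP
    omega

theorem IsAdmissibleWeight.sum_add_two_mul_card_add_card_le (hA : #A = 3)
    (hP : IsAdmissibleWeight w P A) (hQ : IsAdmissibleWeight w Q A) (h : CrossIntersecting P Q)
    (hboth : ∀ a ∈ A, w a + 2 * vertexDegree P a + 2 * vertexDegree Q a ≤ 20) :
    ∑ a ∈ A, w a + 2 * (#P + #Q) ≤ 36 := by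
  obtain rfl | hneP := P.eq_empty_or_nonempty
  · simpa using hQ.sum_add_two_mul_card_le hA
  obtain rfl | hneQ := Q.eq_empty_or_nonempty
  · simpa using hP.sum_add_two_mul_card_le hA
  by_cases hdP : ∃ a ∈ A, 3 ≤ vertexDegree P a
  · obtain ⟨a, haA, ha⟩ := hdP
    exact hP.sum_add_two_mul_card_add_card_le_of_three_le hA hQ h hneQ hboth haA ha
  by_cases hdQ : ∃ a ∈ A, 3 ≤ vertexDegree Q a
  · obtain ⟨a, haA, ha⟩ := hdQ
    rw [add_comm #P]
    exact hQ.sum_add_two_mul_card_add_card_le_of_three_le hA hP h.symm hneP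
      (fun b hb => by have := hboth b hb; omega) haA ha
  push Not at hdP hdQ
  have hcard := h.card_add_card_le_six hA hP.toIsGraphCoveredBy hQ.toIsGraphCoveredBy
    (fun a ha => Nat.le_of_lt_succ (hdP a ha)) (fun a ha => Nat.le_of_lt_succ (hdQ a ha)) hneP hneQ
  have hw : ∑ a ∈ A, w a ≤ #A * 8 := sum_le_card_nsmul _ _ _ hP.le_eight
  omega

end Graphs

section TripleSystems

open Finset

variable {α : Type*} {H : Finset (Finset α)} {A B C D S : Finset α}
  {u v x y z a b c : α}

/-- `A` and `B` are disjoint edges of `H` avoiding the two distinct vertices `u` and `v`. -/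
structure IsAvoidingPair (H : Finset (Finset α)) (u v : α) (A B : Finset α) : Prop where
  ne : u ≠ v
  mem_left : A ∈ H
  mem_right : B ∈ H
  disjoint : Disjoint A B
  fst_notMem_left : u ∉ A
  snd_notMem_left : v ∉ A
  fst_notMem_right : u ∉ B
  snd_notMem_right : v ∉ B

namespace IsAvoidingPair

theorem vertex_symm (h : IsAvoidingPair H u v A B) : IsAvoidingPair H v u A B :=
  ⟨h.ne.symm, h.mem_left, h.mem_right, h.disjoint, h.snd_notMem_left, h.fst_notMem_left,
    h.snd_notMem_right, h.fst_notMem_right⟩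

theorem edge_symm (h : IsAvoidingPair H u v A B) : IsAvoidingPair H u v B A :=
  ⟨h.ne, h.mem_right, h.mem_left, h.disjoint.symm, h.fst_notMem_right, h.snd_notMem_right,
    h.fst_notMem_left, h.snd_notMem_left⟩

end IsAvoidingPair

variable [DecidableEq α]

/-- A 3-graph without three pairwise disjoint edges in which two disjoint edges remain after the
deletion of any two vertices: the form in which 2-resilience with matching number 2 is used, over an
arbitrary vertex type. -/
structure IsResilientTripleSystem (H : Finset (Finset α)) : Prop where
  sized : (H : Set (Finset α)).Sized 3
  not_disjoint_union : ∀ C ∈ H, ∀ D ∈ H, Disjoint C D → ∀ E ∈ H, ¬ Disjoint E (C ∪ D)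
  exists_disjoint_pair : ∀ x y, ∃ C ∈ H, ∃ D ∈ H, Disjoint C D ∧ x ∉ C ∪ D ∧ y ∉ C ∪ D

/-- The third vertices of the edges of a 3-graph through `x` and `y`. -/
def pairLink (H : Finset (Finset α)) (x y : α) : Finset α :=
  {z ∈ H.biUnion id | {x, y, z} ∈ H}

/-- The link graph at `u` of the edges of `H` disjoint from `S`. -/
def linkAvoiding (H : Finset (Finset α)) (u : α) (S : Finset α) : Finset (Finset α) :=
  ({T ∈ H | Disjoint T S} : Finset (Finset α)).memberSubfamily u

/-- For `a ∈ A`, this counts the edges through `a` and one of `u`, `v` whose third vertex lies in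
`B` or is the other one of `u`, `v`; an edge `{u, v, a}` is counted twice. -/
def linkWeight (H : Finset (Finset α)) (u v : α) (B : Finset α) (a : α) : ℕ :=
  #(pairLink H u a ∩ insert v B) + #(pairLink H v a ∩ insert u B)

theorem linkWeight_comm (H : Finset (Finset α)) (u v : α) (B : Finset α) :
    linkWeight H u v B = linkWeight H v u B :=
  funext fun _ => add_comm _ _

theorem mem_pairLink : z ∈ pairLink H x y ↔ {x, y, z} ∈ H := by
  simp only [pairLink, mem_filter, mem_biUnion, id, and_iff_right_iff_imp]
  exact fun h => ⟨_, h, by simp⟩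

theorem mem_pairLink_left_comm : z ∈ pairLink H x y ↔ x ∈ pairLink H z y := by
  rw [mem_pairLink, mem_pairLink, insert_comm x y, pair_comm x z, insert_comm y z]

theorem mem_pairLink_right_comm : z ∈ pairLink H x y ↔ y ∈ pairLink H x z := by
  rw [mem_pairLink, mem_pairLink, pair_comm y z]

theorem mem_linkAvoiding {e : Finset α} :
    e ∈ linkAvoiding H u S ↔ (insert u e ∈ H ∧ Disjoint (insert u e) S) ∧ u ∉ e := by
  rw [linkAvoiding, mem_memberSubfamily, mem_filter]

theorem card_linkAvoiding (H : Finset (Finset α)) (u : α) (S : Finset α) :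
    #(linkAvoiding H u S) = #{T ∈ H | Disjoint T S ∧ u ∈ T} := by
  have hcard := card_memberSubfamily_add_card_nonMemberSubfamily u {T ∈ H | Disjoint T S}
  have hsplit := card_filter_add_card_filter_not (s := {T ∈ H | Disjoint T S}) (u ∈ ·)
  rw [nonMemberSubfamily] at hcard
  rw [filter_filter] at hsplit
  rw [linkAvoiding]
  omega

theorem card_filter_meeting_le_sum_pairLink (hH : (H : Set (Finset α)).Sized 3) (huA : u ∉ A)
    (huS : u ∉ S) (hAS : Disjoint A S) :
    #{T ∈ H | u ∈ T ∧ ¬ Disjoint T A ∧ ¬ Disjoint T S} ≤ ∑ a ∈ A, #(pairLink H u a ∩ S) := by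
  have hsub : {T ∈ H | u ∈ T ∧ ¬ Disjoint T A ∧ ¬ Disjoint T S} ⊆
      A.biUnion fun a => (pairLink H u a ∩ S).image fun z => {u, a, z} := by
    intro T hT
    obtain ⟨hTH, huT, hTA, hTS⟩ := mem_filter.1 hT
    obtain ⟨a, haT, haA⟩ := not_disjoint_iff.1 hTA
    obtain ⟨z, hzT, hzS⟩ := not_disjoint_iff.1 hTS
    have hua : u ≠ a := (ne_of_mem_of_not_mem haA huA).symm
    have huz : u ≠ z := (ne_of_mem_of_not_mem hzS huS).symm
    have haz : a ≠ z := (ne_of_mem_of_not_mem hzS (disjoint_left.1 hAS haA)).symm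
    have hT : {u, a, z} = T := by
      refine eq_of_subset_of_card_le ?_ ?_
      · simp only [insert_subset_iff, singleton_subset_iff, huT, haT, hzT, and_self]
      · rw [hH hTH, card_eq_three.2 ⟨u, a, z, hua, huz, haz, rfl⟩]
    refine mem_biUnion.2 ⟨a, haA, mem_image.2 ⟨z, mem_inter.2 ⟨?_, hzS⟩, hT⟩⟩
    rw [mem_pairLink, hT]
    exact hTH
  exact (card_le_card hsub).trans (card_biUnion_le.trans (sum_le_sum fun a _ => card_image_le))

theorem sized_linkAvoiding (hH : (H : Set (Finset α)).Sized 3) (u : α) (S : Finset α) :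
    (linkAvoiding H u S : Set (Finset α)).Sized 2 := by
  intro e he
  obtain ⟨⟨hmem, -⟩, hu⟩ := mem_linkAvoiding.1 he
  have := hH hmem
  rw [card_insert_of_notMem hu] at this
  omega

theorem vertexDegree_linkAvoiding_le (hH : (H : Set (Finset α)).Sized 3) :
    vertexDegree (linkAvoiding H u S) a ≤ #(pairLink H u a \ S) := by
  have hsized := sized_linkAvoiding hH u S
  refine card_le_card_of_common_vertex (hsized.mono (coe_subset.2 (filter_subset _ _)))
    (fun e he => (mem_filter.1 he).2) ?_ ?_
  · intro ha
    have := hH (mem_pairLink.1 (mem_sdiff.1 ha).1)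
    rw [pair_eq_singleton] at this
    have := card_le_two (a := u) (b := a)
    omega
  · intro e he
    obtain ⟨heP, hae⟩ := mem_filter.1 he
    obtain ⟨z, -, rfl⟩ := exists_eq_insert_iff.2 ⟨singleton_subset_iff.2 hae, (hsized heP).symm⟩
    obtain ⟨⟨hmem, hdisj⟩, -⟩ := mem_linkAvoiding.1 heP
    refine not_disjoint_iff.2 ⟨z, mem_insert_self _ _, mem_sdiff.2 ⟨?_, ?_⟩⟩
    · rw [mem_pairLink, pair_comm]
      exact hmem
    · exact disjoint_left.1 hdisj (mem_insert_of_mem (mem_insert_self _ _))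

theorem IsAvoidingPair.card_insert_right (h : IsAvoidingPair H u v A B)
    (hH : (H : Set (Finset α)).Sized 3) : #(insert v B) = 4 := by
  rw [card_insert_of_notMem h.snd_notMem_right, hH h.mem_right]

theorem IsAvoidingPair.disjoint_insert (h : IsAvoidingPair H u v A B) :
    Disjoint A (insert v B) :=
  disjoint_insert_right.2 ⟨h.snd_notMem_left, h.disjoint⟩

theorem IsAvoidingPair.fst_notMem_insert (h : IsAvoidingPair H u v A B) : u ∉ insert v B :=
  fun hu => (mem_insert.1 hu).elim h.ne h.fst_notMem_right

theorem IsAvoidingPair.disjoint_pairLink_sdiff (h : IsAvoidingPair H u v A B) (ha : a ∈ A)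
    (hcross : ∀ e ∈ linkAvoiding H u (insert v B), a ∈ e → ¬ e ⊆ A) :
    Disjoint (pairLink H u a \ insert v B) A := by
  refine disjoint_left.2 fun z hz hzA => ?_
  obtain ⟨hz, -⟩ := mem_sdiff.1 hz
  have haz : {a, z} ⊆ A := insert_subset ha (singleton_subset_iff.2 hzA)
  refine hcross {a, z} (mem_linkAvoiding.2 ⟨⟨mem_pairLink.1 hz, ?_⟩, ?_⟩) (mem_insert_self _ _) haz
  · exact disjoint_insert_left.2 ⟨h.fst_notMem_insert, h.disjoint_insert.mono_left haz⟩
  · exact fun hu => h.fst_notMem_left (haz hu)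

namespace IsResilientTripleSystem

variable (hH : IsResilientTripleSystem H)
include hH

theorem pairLink_subset_union (hC : C ∈ H) (hD : D ∈ H) (hCD : Disjoint C D)
    (hx : x ∉ C ∪ D) (hy : y ∉ C ∪ D) : pairLink H x y ⊆ C ∪ D := by
  intro z hz
  have := hH.not_disjoint_union C hC D hD hCD _ (mem_pairLink.1 hz)
  simp only [disjoint_insert_left, disjoint_singleton_left, hx, hy, not_false_eq_true, true_and,
    not_not] at this
  exact this

theorem card_union (hC : C ∈ H) (hD : D ∈ H) (hCD : Disjoint C D) : #(C ∪ D) = 6 := by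
  rw [card_union_of_disjoint hCD, hH.sized hC, hH.sized hD]

theorem card_pairLink_le_six (x y : α) : #(pairLink H x y) ≤ 6 := by
  obtain ⟨C, hC, D, hD, hCD, hx, hy⟩ := hH.exists_disjoint_pair x y
  exact (card_le_card (hH.pairLink_subset_union hC hD hCD hx hy)).trans_eq (hH.card_union hC hD hCD)

theorem isGraphCoveredBy_linkAvoiding (h : IsAvoidingPair H u v A B) :
    IsGraphCoveredBy (linkAvoiding H u (insert v B)) A where
  sized := sized_linkAvoiding hH.sized _ _
  not_disjoint e he hdisj := by
    obtain ⟨⟨hmem, hvB⟩, -⟩ := mem_linkAvoiding.1 he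
    refine hH.not_disjoint_union A h.mem_left B h.mem_right h.disjoint _ hmem ?_
    exact disjoint_union_right.2 ⟨disjoint_insert_left.2 ⟨h.fst_notMem_left, hdisj⟩,
      (disjoint_insert_right.1 hvB).2⟩

theorem crossIntersecting_linkAvoiding (h : IsAvoidingPair H u v A B) :
    CrossIntersecting (linkAvoiding H u (insert v B)) (linkAvoiding H v (insert u B)) := by
  intro e he f hf hef
  obtain ⟨⟨heH, heB⟩, -⟩ := mem_linkAvoiding.1 he
  obtain ⟨⟨hfH, hfB⟩, -⟩ := mem_linkAvoiding.1 hf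
  obtain ⟨hve, heB⟩ := disjoint_insert_right.1 heB
  obtain ⟨huf, hfB⟩ := disjoint_insert_right.1 hfB
  refine hH.not_disjoint_union _ hfH B h.mem_right hfB _ heH (disjoint_union_right.2 ⟨?_, heB⟩)
  exact disjoint_insert_left.2 ⟨huf, disjoint_insert_right.2
    ⟨fun hve' => hve (mem_insert_of_mem hve'), hef⟩⟩

theorem card_pairLink_inter_le (h : IsAvoidingPair H u v A B) (x y : α) :
    #(pairLink H x y ∩ insert v B) ≤ 4 :=
  (card_le_card inter_subset_right).trans (h.card_insert_right hH.sized).le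

theorem pairLink_sdiff_subset (h : IsAvoidingPair H u v A B) (ha : a ∈ A) (hC : C ∈ H)
    (hCB : Disjoint C B) (hu : u ∉ C) (haC : a ∉ C) : pairLink H u a \ insert v B ⊆ C := by
  intro z hz
  obtain ⟨hz, hzS⟩ := mem_sdiff.1 hz
  have hzB : z ∉ B := fun hzB => hzS (mem_insert_of_mem hzB)
  have := hH.not_disjoint_union C hC B h.mem_right hCB _ (mem_pairLink.1 hz)
  simpa [hu, haC, h.fst_notMem_right, disjoint_left.1 h.disjoint ha, hzB] using this

theorem card_pairLink_of_four_le (h : IsAvoidingPair H u v A B) (ha : a ∈ A)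
    (h4 : 4 ≤ #(pairLink H u a \ insert v B)) :
    #(pairLink H u a \ insert v B) = 4 ∧ #(pairLink H v a ∩ insert u B) ≤ 2 := by
  obtain ⟨C, hC, D, hD, hCD, hu, ha'⟩ := hH.exists_disjoint_pair u a
  have hmeet : ∀ E ∈ H, E ⊆ C ∪ D → 0 < #(E ∩ B) := by
    intro E hE hECD
    refine card_pos.2 (not_disjoint_iff_nonempty_inter.1 fun hEB => ?_)
    have := card_le_card (hH.pairLink_sdiff_subset h ha hE hEB (fun h => hu (hECD h))
      fun h => ha' (hECD h))
    rw [hH.sized hE] at this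
    omega
  have hCB := hmeet C hC subset_union_left
  have hDB := hmeet D hD subset_union_right
  have hinter : #((C ∪ D) ∩ B) = #(C ∩ B) + #(D ∩ B) := by
    rw [union_inter_distrib_right, card_union_of_disjoint
      (hCD.mono inter_subset_left inter_subset_left)]
  have hsplit := card_sdiff_add_card_inter (C ∪ D) B
  rw [hH.card_union hC hD hCD] at hsplit
  have hsub : pairLink H u a \ insert v B ⊆ ((C ∪ D) \ B).erase v := by
    rw [← sdiff_insert]
    exact sdiff_subset_sdiff (hH.pairLink_subset_union hC hD hCD hu ha') Subset.rfl
  have hle := card_le_card hsub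
  have hv : v ∉ C ∪ D := by
    intro hv
    have := card_erase_of_mem (mem_sdiff.2 ⟨hv, h.snd_notMem_right⟩)
    omega
  have hlink : pairLink H v a ∩ insert u B ⊆ (C ∪ D) ∩ B := by
    intro z hz
    obtain ⟨hz, hzB⟩ := mem_inter.1 hz
    have hzCD := hH.pairLink_subset_union hC hD hCD hv ha' hz
    exact mem_inter.2 ⟨hzCD, (mem_insert.1 hzB).resolve_left (ne_of_mem_of_not_mem hzCD hu)⟩
  have := card_le_card hlink
  have := card_erase_le (s := (C ∪ D) \ B) (a := v)
  omega

theorem linkWeight_le (h : IsAvoidingPair H u v A B) (a : α) : linkWeight H u v B a ≤ 8 :=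
  add_le_add (hH.card_pairLink_inter_le h u a) (hH.card_pairLink_inter_le h.vertex_symm v a)

theorem linkWeight_add_two_mul_le (h : IsAvoidingPair H u v A B) (ha : a ∈ A) :
    linkWeight H u v B a + 2 * #(pairLink H u a \ insert v B) ≤ 13 := by
  have := hH.card_pairLink_of_four_le h ha
  have := hH.card_pairLink_inter_le h.vertex_symm v a
  have := hH.card_pairLink_le_six u a
  have := card_sdiff_add_card_inter (pairLink H u a) (insert v B)
  rw [linkWeight]
  omega

theorem card_pairLink_of_thirteen_le (h : IsAvoidingPair H u v A B) (ha : a ∈ A)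
    (h13 : 13 ≤ linkWeight H u v B a + 2 * #(pairLink H u a \ insert v B)) :
    #(pairLink H u a \ insert v B) = 3 ∧ #(pairLink H u a) = 6 ∧ ¬ B ⊆ pairLink H u a ∧
      insert u B ⊆ pairLink H v a := by
  have h4 := hH.card_pairLink_of_four_le h ha
  have h6 := hH.card_pairLink_le_six u a
  have hsplit := card_sdiff_add_card_inter (pairLink H u a) (insert v B)
  have hinter := hH.card_pairLink_inter_le h.vertex_symm v a
  rw [linkWeight] at h13
  have hBv : insert u B ⊆ pairLink H v a := inter_eq_right.1 <|
    eq_of_subset_of_card_le inter_subset_right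
      (by rw [h.vertex_symm.card_insert_right hH.sized]; omega)
  have hv : v ∈ pairLink H u a := mem_pairLink_left_comm.1 (hBv (mem_insert_self u B))
  refine ⟨by omega, by omega, fun hB => ?_, hBv⟩
  rw [inter_eq_right.2 (insert_subset hv hB), h.card_insert_right hH.sized] at hsplit h13
  omega

theorem linkWeight_add_two_mul_add_two_mul_le (h : IsAvoidingPair H u v A B) (ha : a ∈ A) :
    linkWeight H u v B a + 2 * #(pairLink H u a \ insert v B) +
      2 * #(pairLink H v a \ insert u B) ≤ 20 := by
  have := hH.card_pairLink_of_four_le h ha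
  have := hH.card_pairLink_of_four_le h.vertex_symm ha
  have := hH.card_pairLink_le_six u a
  have := hH.card_pairLink_le_six v a
  have := card_sdiff_add_card_inter (pairLink H u a) (insert v B)
  have := card_sdiff_add_card_inter (pairLink H v a) (insert u B)
  rw [linkWeight]
  omega

theorem exists_isAvoidingPair_not_subset (h : IsAvoidingPair H u v A B)
    (h6 : #(pairLink H u a) = 6) (hv : v ∈ pairLink H u a)
    (hdisj : Disjoint (pairLink H u a \ insert v B) A) (hB : ¬ B ⊆ pairLink H u a) :
    ∃ D, IsAvoidingPair H u v A D ∧ ¬ B ⊆ D := by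
  obtain ⟨C, hC, D, hD, hCD, hu, ha⟩ := hH.exists_disjoint_pair u a
  have hlink : pairLink H u a = C ∪ D :=
    eq_of_subset_of_card_le (hH.pairLink_subset_union hC hD hCD hu ha)
      (by rw [h6, hH.card_union hC hD hCD])
  obtain ⟨E, hE, hEsub, hvE⟩ : ∃ E ∈ H, E ⊆ pairLink H u a ∧ v ∉ E := by
    rw [hlink] at hv ⊢
    obtain hvC | hvD := mem_union.1 hv
    · exact ⟨D, hD, subset_union_right, disjoint_left.1 hCD hvC⟩
    · exact ⟨C, hC, subset_union_left, disjoint_right.1 hCD hvD⟩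
  have hAE : Disjoint A E := by
    refine disjoint_right.2 fun z hzE hzA => ?_
    refine disjoint_left.1 hdisj (mem_sdiff.2 ⟨hEsub hzE, fun hz => ?_⟩) hzA
    obtain rfl | hzB := mem_insert.1 hz
    · exact hvE hzE
    · exact disjoint_left.1 h.disjoint hzA hzB
  have huE : u ∉ E := fun huE => hu (hlink ▸ hEsub huE)
  exact ⟨E, ⟨h.ne, h.mem_left, hE, hAE, h.fst_notMem_left, h.snd_notMem_left, huE, hvE⟩,
    fun hBE => hB (hBE.trans hEsub)⟩

theorem notMem_pairLink_of_isAvoidingPair (h : IsAvoidingPair H u v A B)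
    (hD : IsAvoidingPair H u v A D) (ha : a ∈ A) (hc : c ∈ A) (hac : a ≠ c)
    (hx : x ∈ pairLink H u a \ insert v B) (hxc : x ≠ c) (hxD : x ∉ D) (hb : b ∈ B)
    (hbD : b ∉ D) : b ∉ pairLink H v c := by
  intro hbvc
  obtain ⟨hx, hxB⟩ := mem_sdiff.1 hx
  rw [mem_insert, not_or] at hxB
  have hbA := disjoint_right.1 h.disjoint hb
  have hvcb : Disjoint {v, c, b} D := by
    simp [hD.snd_notMem_right, disjoint_left.1 hD.disjoint hc, hbD]
  have huax : Disjoint {u, a, x} D := by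
    simp [hD.fst_notMem_right, disjoint_left.1 hD.disjoint ha, hxD]
  have hdisj : Disjoint {u, a, x} ({v, c, b} : Finset α) := by
    simp [h.ne.symm, hac.symm, Ne.symm hxB.1, hxc.symm, ne_of_mem_of_not_mem hb hxB.2,
      ne_of_mem_of_not_mem hc h.fst_notMem_left, ne_of_mem_of_not_mem hb h.fst_notMem_right,
      (ne_of_mem_of_not_mem ha h.snd_notMem_left).symm, (ne_of_mem_of_not_mem ha hbA).symm]
  exact hH.not_disjoint_union _ (mem_pairLink.1 hbvc) D hD.mem_right hvcb _ (mem_pairLink.1 hx)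
    (disjoint_union_right.2 ⟨hdisj, huax⟩)

theorem linkWeight_add_two_mul_le_of_not_subset (h : IsAvoidingPair H u v A B)
    (hD : IsAvoidingPair H u v A D) (hBD : ¬ B ⊆ D) (ha : a ∈ A) (hB : B ⊆ pairLink H v a)
    (h3 : 3 ≤ #(pairLink H u a \ insert v B))
    (hdisj : Disjoint (pairLink H u a \ insert v B) A) (hc : c ∈ A) (hca : c ≠ a) :
    linkWeight H u v B c + 2 * #(pairLink H u c \ insert v B) ≤ 11 := by
  have hDB : #(D \ B) ≤ 2 := by
    have hmeet : 0 < #(D ∩ B) := card_pos.2 <| not_disjoint_iff_nonempty_inter.1 fun hDB =>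
      hH.not_disjoint_union A h.mem_left B h.mem_right h.disjoint D hD.mem_right
        (disjoint_union_right.2 ⟨hD.disjoint.symm, hDB⟩)
    have := card_sdiff_add_card_inter D B
    rw [hH.sized hD.mem_right] at this
    omega
  have sdiff_subset : ∀ {X}, X \ insert v B ⊆ D → X \ insert v B ⊆ D \ B := fun hX z hz =>
    mem_sdiff.2 ⟨hX hz, fun hzB => (mem_sdiff.1 hz).2 (mem_insert_of_mem hzB)⟩
  obtain ⟨b, hbB, hbD⟩ := not_subset.1 hBD
  obtain ⟨x, hx, hxD⟩ : ∃ x ∈ pairLink H u a \ insert v B, x ∉ D := by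
    refine not_subset.1 fun hsub => ?_
    have := card_le_card (sdiff_subset hsub)
    omega
  have hxc : x ≠ c := fun hxc => disjoint_left.1 hdisj hx (hxc ▸ hc)
  have hb : b ∉ pairLink H v c :=
    hH.notMem_pairLink_of_isAvoidingPair h hD ha hc hca.symm hx hxc hxD hbB hbD
  have hinter : #(pairLink H v c ∩ insert u B) ≤ 3 := by
    have hlt : #(pairLink H v c ∩ insert u B) < #(insert u B) :=
      card_lt_card <| inter_subset_right.ssubset_of_mem_notMem (mem_insert_of_mem hbB)
        fun hmem => hb (mem_inter.1 hmem).1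
    rw [h.vertex_symm.card_insert_right hH.sized] at hlt
    omega
  have hout : #(pairLink H u c \ insert v B) ≤ 2 := by
    refine (card_le_card (sdiff_subset fun z hz => ?_)).trans hDB
    by_contra hzD
    refine hH.notMem_pairLink_of_isAvoidingPair h hD hc ha hca hz ?_ hzD hbB hbD (hB hbB)
    rintro rfl
    obtain ⟨hz, -⟩ := mem_sdiff.1 hz
    exact disjoint_left.1 hdisj (mem_sdiff.2 ⟨mem_pairLink_right_comm.1 hz,
      disjoint_left.1 h.disjoint_insert hc⟩) hc
  have := hH.card_pairLink_inter_le h u c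
  rw [linkWeight]
  omega

theorem isAdmissibleWeight_linkWeight (h : IsAvoidingPair H u v A B) :
    IsAdmissibleWeight (linkWeight H u v B) (linkAvoiding H u (insert v B)) A where
  toIsGraphCoveredBy := hH.isGraphCoveredBy_linkAvoiding h
  le_eight a _ := hH.linkWeight_le h a
  add_le a ha := by
    have := hH.linkWeight_add_two_mul_le h ha
    have := vertexDegree_linkAvoiding_le hH.sized (u := u) (S := insert v B) (a := a)
    omega
  add_le_of_extremal a ha h13 hcross c hc hca := by
    have hdeg := vertexDegree_linkAvoiding_le hH.sized (u := u) (S := insert v B) (a := a)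
    have hdegc := vertexDegree_linkAvoiding_le hH.sized (u := u) (S := insert v B) (a := c)
    obtain ⟨h3, h6, hB, hBv⟩ := hH.card_pairLink_of_thirteen_le h ha (by omega)
    have hv : v ∈ pairLink H u a := mem_pairLink_left_comm.1 (hBv (mem_insert_self u B))
    have hdisj := h.disjoint_pairLink_sdiff ha hcross
    obtain ⟨D, hD, hBD⟩ := hH.exists_isAvoidingPair_not_subset h h6 hv hdisj hB
    have := hH.linkWeight_add_two_mul_le_of_not_subset h hD hBD ha
      ((subset_insert u B).trans hBv) h3.ge hdisj hc hca
    omega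

theorem sum_linkWeight_add_two_mul_card_add_card_le (h : IsAvoidingPair H u v A B) :
    ∑ a ∈ A, linkWeight H u v B a +
      2 * (#(linkAvoiding H u (insert v B)) + #(linkAvoiding H v (insert u B))) ≤ 36 := by
  refine (hH.isAdmissibleWeight_linkWeight h).sum_add_two_mul_card_add_card_le
    (hH.sized h.mem_left) ?_ (hH.crossIntersecting_linkAvoiding h) fun a ha => ?_
  · rw [linkWeight_comm]
    exact hH.isAdmissibleWeight_linkWeight h.vertex_symm
  · have := hH.linkWeight_add_two_mul_add_two_mul_le h ha
    have := vertexDegree_linkAvoiding_le hH.sized (u := u) (S := insert v B) (a := a)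
    have := vertexDegree_linkAvoiding_le hH.sized (u := v) (S := insert u B) (a := a)
    omega

theorem two_mul_card_disjoint_add_card_le (h : IsAvoidingPair H u v A B) :
    2 * #{T ∈ H | (T ∩ {u, v}).Nonempty ∧ Disjoint T B} +
      #{T ∈ H | (T ∩ {u, v}).Nonempty ∧ ¬ Disjoint T A ∧ ¬ Disjoint T B} ≤ 36 := by
  have hEu := card_filter_meeting_le_sum_pairLink hH.sized h.fst_notMem_left h.fst_notMem_insert
    h.disjoint_insert
  have hEv := card_filter_meeting_le_sum_pairLink hH.sized h.vertex_symm.fst_notMem_left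
    h.vertex_symm.fst_notMem_insert h.vertex_symm.disjoint_insert
  have hcount : 2 * #{T ∈ H | (T ∩ {u, v}).Nonempty ∧ Disjoint T B} +
        #{T ∈ H | (T ∩ {u, v}).Nonempty ∧ ¬ Disjoint T A ∧ ¬ Disjoint T B} ≤
      2 * #{T ∈ H | Disjoint T (insert v B) ∧ u ∈ T} +
        2 * #{T ∈ H | Disjoint T (insert u B) ∧ v ∈ T} +
        #{T ∈ H | u ∈ T ∧ ¬ Disjoint T A ∧ ¬ Disjoint T (insert v B)} +
        #{T ∈ H | v ∈ T ∧ ¬ Disjoint T A ∧ ¬ Disjoint T (insert u B)} := by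
    -- An edge through both `u` and `v` misses neither `insert v B` nor `insert u B`; if it misses
    -- `B`, it meets `A` and is counted in each of the last two sets.
    simp only [card_filter, mul_sum, ← sum_add_distrib]
    refine sum_le_sum fun T hT => ?_
    have hmeet : (T ∩ {u, v}).Nonempty ↔ u ∈ T ∨ v ∈ T := by
      simp [← not_disjoint_iff_nonempty_inter, or_iff_not_imp_left]
    have hnot : ¬ (Disjoint T A ∧ Disjoint T B) := fun hAB =>
      hH.not_disjoint_union A h.mem_left B h.mem_right h.disjoint T hT (disjoint_union_right.2 hAB)
    simp only [hmeet, disjoint_insert_right]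
    by_cases u ∈ T <;> by_cases v ∈ T <;> by_cases Disjoint T A <;> by_cases Disjoint T B <;>
      simp_all
  have hmain := hH.sum_linkWeight_add_two_mul_card_add_card_le h
  simp only [linkWeight, sum_add_distrib, card_linkAvoiding] at hmain
  omega

theorem card_filter_inter_nonempty_le_of_isAvoidingPair (h : IsAvoidingPair H u v A B) :
    #{T ∈ H | (T ∩ {u, v}).Nonempty} ≤ 36 := by
  have hA := hH.two_mul_card_disjoint_add_card_le h
  have hB := hH.two_mul_card_disjoint_add_card_le h.edge_symm
  have hcover : {T ∈ H | (T ∩ {u, v}).Nonempty} ⊆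
      {T ∈ H | (T ∩ {u, v}).Nonempty ∧ Disjoint T B} ∪
        ({T ∈ H | (T ∩ {u, v}).Nonempty ∧ Disjoint T A} ∪
          {T ∈ H | (T ∩ {u, v}).Nonempty ∧ ¬ Disjoint T A ∧ ¬ Disjoint T B}) := by
    intro T
    simp only [mem_union, mem_filter]
    tauto
  have hcard := (card_le_card hcover).trans <| (card_union_le _ _).trans <|
    Nat.add_le_add_left (card_union_le _ _) _
  simp only [and_comm (a := ¬ Disjoint _ B)] at hB
  omega

theorem exists_isAvoidingPair (huv : u ≠ v) : ∃ A B, IsAvoidingPair H u v A B := by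
  obtain ⟨A, hA, B, hB, hAB, hu, hv⟩ := hH.exists_disjoint_pair u v
  rw [mem_union, not_or] at hu hv
  exact ⟨A, B, huv, hA, hB, hAB, hu.1, hv.1, hu.2, hv.2⟩

end IsResilientTripleSystem

theorem stmt10_general (hH : IsResilientTripleSystem H) (u v : α) :
    #{T ∈ H | (T ∩ {u, v}).Nonempty} ≤ 36 := by
  by_cases huv : u = v
  · obtain ⟨C, hC, D, -, -, hu, -⟩ := hH.exists_disjoint_pair u u
    obtain ⟨w, hw⟩ : C.Nonempty := card_pos.1 (by rw [hH.sized hC]; omega)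
    have huw : u ≠ w := fun huw => hu (mem_union_left _ (huw ▸ hw))
    obtain ⟨A, B, h⟩ := hH.exists_isAvoidingPair huw
    refine (card_le_card fun T hT => ?_).trans
      (hH.card_filter_inter_nonempty_le_of_isAvoidingPair h)
    rw [mem_filter] at hT ⊢
    exact ⟨hT.1, hT.2.mono (inter_subset_inter_left (by simp [← huv]))⟩
  · obtain ⟨A, B, h⟩ := hH.exists_isAvoidingPair huv
    exact hH.card_filter_inter_nonempty_le_of_isAvoidingPair h

end TripleSystems

section MatchingNumber

open Finset

theorem bddAbove_card_matching (H : Finset (Finset ℕ)) :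
    BddAbove {m | ∃ M : Finset (Finset ℕ), M ⊆ H ∧ #M = m ∧
      (M : Set (Finset ℕ)).PairwiseDisjoint id} := by
  refine ⟨#H, ?_⟩
  rintro m ⟨M, hM, rfl, -⟩
  exact card_le_card hM

theorem card_le_matchingNumber {H M : Finset (Finset ℕ)} (hM : M ⊆ H)
    (hdisj : (M : Set (Finset ℕ)).PairwiseDisjoint id) : #M ≤ matchingNumber H :=
  le_csSup (bddAbove_card_matching H) ⟨M, hM, rfl, hdisj⟩

theorem exists_matching_card_eq (H : Finset (Finset ℕ)) :
    ∃ M ⊆ H, #M = matchingNumber H ∧ (M : Set (Finset ℕ)).PairwiseDisjoint id :=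
  Nat.sSup_mem (by exact ⟨0, ∅, empty_subset H, card_empty, by simp⟩) (bddAbove_card_matching H)

theorem isResilientTripleSystem_of_resilient {H : Finset (Finset ℕ)}
    (hsized : (H : Set (Finset ℕ)).Sized 3) (hres : Resilient 2 H) (hν : matchingNumber H = 2) :
    IsResilientTripleSystem H where
  sized := hsized
  not_disjoint_union C hC D hD hCD E hE hdisj := by
    obtain ⟨hEC, hED⟩ := disjoint_union_right.1 hdisj
    have hne : ∀ X ∈ H, X ≠ ∅ := fun X hX h => by simpa [h] using hsized hX
    have hcard : #{C, D, E} = 3 := card_eq_three.2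
      ⟨C, D, E, hCD.ne (hne C hC), (hEC.ne (hne E hE)).symm, (hED.ne (hne E hE)).symm, rfl⟩
    have := card_le_matchingNumber (M := {C, D, E}) (H := H)
      (by simp [insert_subset_iff, hC, hD, hE])
      (by simp [Set.pairwiseDisjoint_insert, hCD, hEC.symm, hED.symm])
    omega
  exists_disjoint_pair x y := by
    obtain ⟨M, hM, hcard, hdisj⟩ := exists_matching_card_eq {T ∈ H | Disjoint T {x, y}}
    obtain ⟨C, D, hCD, rfl⟩ := card_eq_two.1 (hcard.trans ((hres {x, y} card_le_two).trans hν))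
    simp only [insert_subset_iff, singleton_subset_iff, mem_filter, disjoint_insert_right,
      disjoint_singleton_right] at hM
    obtain ⟨⟨hC, hxC, hyC⟩, hD, hxD, hyD⟩ := hM
    exact ⟨C, hC, D, hD, hdisj (by simp) (by simp) hCD, by simp [hxC, hxD], by simp [hyC, hyD]⟩

end MatchingNumber

/-- In a 2-resilient 3-graph with matching number 2, at most 36
edges meet any given pair of vertices `{u, v}`. -/
theorem stmt10 (n : ℕ) (H : Finset (Finset ℕ))
    (hH : H ⊆ (Finset.range n).powersetCard 3)
    (hres : Resilient 2 H) (hν : matchingNumber H = 2)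
    (u v : ℕ) (hu : u ∈ Finset.range n) (hv : v ∈ Finset.range n) :
    (H.filter fun T => (T ∩ {u, v}).Nonempty).card ≤ 36 := by
  exact stmt10_general (isResilientTripleSystem_of_resilient
    (fun _ hT => (Finset.mem_powersetCard.1 (hH hT)).2) hres hν) u v
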